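/- arXiv:2408.01306 — 3 statements merged into one kernel-verified Lean document; each statement's English description precedes it below -/
import Mathlib

section
/- Let l be a non-zero integer. There is a threshold X₀ depending only on l such that the following holds: if t ≥ 2 is an integer and a < b are positive integers with t·a²(a²+l) = b²(b²+l), and if, with D = gcd(a, b), x = a/D, y = b/D, one has x ≥ X₀, then 0.9·t^{1/4}·x < y < 1.1·t^{1/4}·x and 0.3·x/√t ≤ D ≤ √(|l|·t)·x. -/
/-!
Write `a = D x`, `b = D y` with `x`, `y` coprime; the equation becomes
`t x² (D² x² + l) = y² (D² y² + l)`. The threshold makes `10 |l| ≤ a² < b²`, so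
`t x⁴` and `y⁴` agree up to a factor `11/9`, which gives the bounds on `y`.

*Upper bound on `D`.* The equation reads `D² (t x⁴ - y⁴) = l (y² - t x²)`. The factor
`t x⁴ - y⁴` is non-zero, as otherwise `y² = t x²` and then `t = 1`; hence
`D² ≤ |l| |y² - t x²| ≤ |l| t x²`.

*Lower bound on `D`.* By coprimality `D² y² + l = k x²` and `t (D² x² + l) = k y²` for some `k`.
With `m = k² - t D⁴` these relations give `m x² = l (k + t D²)` and `m y² = t l (k + D²)`, so that
`l ∣ m` by coprimality again. Dividing the first identity by `l` shows that `x²` divides the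
positive number `k + t D²`, so `x² ≤ k + t D²`, which is `O(t D²)`.
-/

/-- `t x⁴` and `y⁴` agree up to a factor `11/9`. -/
lemma fourth_power_bounds {l t D x y : ℤ} (ht : 2 ≤ t) (hD : 0 < D) (hx : 0 < x) (hxy : x < y)
    (hbig : 10 * |l| ≤ D ^ 2 * x ^ 2)
    (h : t * (x ^ 2 * (D ^ 2 * x ^ 2 + l)) = y ^ 2 * (D ^ 2 * y ^ 2 + l)) :
    9 * (t * x ^ 4) ≤ 11 * y ^ 4 ∧ 9 * y ^ 4 ≤ 11 * (t * x ^ 4) := by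
  have hB : D ^ 2 * x ^ 2 ≤ D ^ 2 * y ^ 2 := by gcongr
  have h1 := le_abs_self l
  have h2 := neg_abs_le l
  have hD2 : 0 < D ^ 2 := by positivity
  have ht0 : 0 < t := by linarith
  have a1 : t * x ^ 2 * (9 * (D ^ 2 * x ^ 2)) ≤ t * x ^ 2 * (10 * (D ^ 2 * x ^ 2 + l)) :=
    mul_le_mul_of_nonneg_left (by linarith) (by positivity)
  have a2 : t * x ^ 2 * (10 * (D ^ 2 * x ^ 2 + l)) ≤ t * x ^ 2 * (11 * (D ^ 2 * x ^ 2)) :=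
    mul_le_mul_of_nonneg_left (by linarith) (by positivity)
  have b1 : y ^ 2 * (9 * (D ^ 2 * y ^ 2)) ≤ y ^ 2 * (10 * (D ^ 2 * y ^ 2 + l)) :=
    mul_le_mul_of_nonneg_left (by linarith) (by positivity)
  have b2 : y ^ 2 * (10 * (D ^ 2 * y ^ 2 + l)) ≤ y ^ 2 * (11 * (D ^ 2 * y ^ 2)) :=
    mul_le_mul_of_nonneg_left (by linarith) (by positivity)
  constructor
  · refine le_of_mul_le_mul_left ?_ hD2
    linarith
  · refine le_of_mul_le_mul_left ?_ hD2
    linarith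

lemma sq_le_two_mul {t x y : ℤ} (ht : 2 ≤ t) (h : 9 * y ^ 4 ≤ 11 * (t * x ^ 4)) :
    y ^ 2 ≤ 2 * (t * x ^ 2) := by
  refine (sq_le_sq₀ (by positivity) (by positivity)).mp ?_
  have h1 : t * x ^ 4 ≤ t ^ 2 * x ^ 4 := by
    have : t ≤ t ^ 2 := by nlinarith
    gcongr
  have h2 : 0 ≤ t * x ^ 4 := by positivity
  linarith

lemma gcd_sq_upper {l t D x y : ℤ} (hl : l ≠ 0) (ht : 2 ≤ t) (hx : 0 < x)
    (hy : y ^ 2 ≤ 2 * (t * x ^ 2))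
    (h : t * (x ^ 2 * (D ^ 2 * x ^ 2 + l)) = y ^ 2 * (D ^ 2 * y ^ 2 + l)) :
    D ^ 2 ≤ |l| * t * x ^ 2 := by
  have key : D ^ 2 * (t * x ^ 4 - y ^ 4) = l * (y ^ 2 - t * x ^ 2) := by linarith
  have hne : t * x ^ 4 - y ^ 4 ≠ 0 := by
    intro h0
    rw [h0, mul_zero, eq_comm, mul_eq_zero] at key
    have h1 : y ^ 2 = t * x ^ 2 := by
      have := key.resolve_left hl
      linarith
    have h2 : t * (t - 1) * x ^ 4 = 0 := by
      linear_combination -h0 - (y ^ 2 + t * x ^ 2) * h1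
    have h3 : 0 < t * (t - 1) * x ^ 4 := by
      have : 0 < t := by linarith
      have : 0 < t - 1 := by linarith
      positivity
    omega
  have h1 : 1 ≤ |t * x ^ 4 - y ^ 4| := Int.one_le_abs hne
  have h2 : |y ^ 2 - t * x ^ 2| ≤ t * x ^ 2 := by
    rw [abs_le]
    constructor <;> nlinarith [sq_nonneg y]
  calc D ^ 2 ≤ D ^ 2 * |t * x ^ 4 - y ^ 4| := le_mul_of_one_le_right (sq_nonneg D) h1
    _ = |D ^ 2 * (t * x ^ 4 - y ^ 4)| := by rw [abs_mul, abs_of_nonneg (sq_nonneg D)]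
    _ = |l| * |y ^ 2 - t * x ^ 2| := by rw [key, abs_mul]
    _ ≤ |l| * (t * x ^ 2) := by gcongr
    _ = |l| * t * x ^ 2 := by ring

lemma gcd_sq_lower {l t D x y : ℤ} (hl : l ≠ 0) (ht : 2 ≤ t) (hD : 0 < D) (hx : 0 < x)
    (hxy : x < y) (hco : IsCoprime x y) (hbig : 10 * |l| ≤ D ^ 2 * x ^ 2)
    (hy : y ^ 2 ≤ 2 * (t * x ^ 2))
    (h : t * (x ^ 2 * (D ^ 2 * x ^ 2 + l)) = y ^ 2 * (D ^ 2 * y ^ 2 + l)) :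
    x ^ 2 ≤ 4 * (t * D ^ 2) := by
  have hco2 : IsCoprime (x ^ 2) (y ^ 2) := hco.pow
  obtain ⟨k, hk⟩ : x ^ 2 ∣ D ^ 2 * y ^ 2 + l := by
    apply hco2.dvd_of_dvd_mul_left
    exact ⟨t * (D ^ 2 * x ^ 2 + l), by linarith⟩
  have hx2 : 0 < x ^ 2 := by positivity
  have hk' : y ^ 2 * k = t * (D ^ 2 * x ^ 2 + l) := by
    apply mul_left_cancel₀ hx2.ne'
    linear_combination (-y ^ 2) * hk - h
  have hB : D ^ 2 * x ^ 2 ≤ D ^ 2 * y ^ 2 := by gcongr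
  have hl1 := le_abs_self l
  have hl2 := neg_abs_le l
  have hl0 : 0 < |l| := abs_pos.mpr hl
  have hkpos : 0 < k := by
    refine pos_of_mul_pos_right (a := x ^ 2) ?_ hx2.le
    linarith
  have hkle : k ≤ 3 * (t * D ^ 2) := by
    refine le_of_mul_le_mul_left ?_ hx2
    have : D ^ 2 * y ^ 2 ≤ D ^ 2 * (2 * (t * x ^ 2)) := by gcongr
    have : 0 ≤ D ^ 2 * (t * x ^ 2) := by positivity
    linarith
  have mx : (k ^ 2 - t * D ^ 4) * x ^ 2 = l * (k + t * D ^ 2) := by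
    linear_combination (-k) * hk + D ^ 2 * hk'
  have my : (k ^ 2 - t * D ^ 4) * y ^ 2 = l * (t * (k + D ^ 2)) := by
    linear_combination k * hk' - t * D ^ 2 * hk
  obtain ⟨n, hn⟩ : l ∣ k ^ 2 - t * D ^ 4 := by
    obtain ⟨u, v, huv⟩ := hco2
    refine ⟨u * (k + t * D ^ 2) + v * (t * (k + D ^ 2)), ?_⟩
    linear_combination u * mx + v * my - (k ^ 2 - t * D ^ 4) * huv
  have hnx : x ^ 2 * n = k + t * D ^ 2 := by
    apply mul_left_cancel₀ hl
    linear_combination mx - x ^ 2 * hn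
  have hpos : 0 < k + t * D ^ 2 := by positivity
  have := Int.le_of_dvd hpos ⟨n, hnx.symm⟩
  linarith

/-- Size estimates: for `x = a/D`, `y = b/D` sufficiently large (in terms of `l`),
the equation `t·a²(a²+l) = b²(b²+l)` forces `0.9·t^{1/4}·x < y < 1.1·t^{1/4}·x`
and `0.3·x/√t ≤ D ≤ √(|l|·t)·x`. -/
theorem stmt_16 (l : ℤ) (hl : l ≠ 0) :
    ∃ X₀ : ℤ, ∀ t : ℤ, 2 ≤ t → ∀ a b : ℤ, 0 < a → a < b →
      t * (a ^ 2 * (a ^ 2 + l)) = b ^ 2 * (b ^ 2 + l) →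
        ∀ D x y : ℤ, D = Int.gcd a b → x = a / D → y = b / D → X₀ ≤ x →
          (0.9 * (t : ℝ) ^ ((1 : ℝ) / 4) * (x : ℝ) < (y : ℝ) ∧
            (y : ℝ) < 1.1 * (t : ℝ) ^ ((1 : ℝ) / 4) * (x : ℝ)) ∧
          (0.3 * (x : ℝ) / Real.sqrt (t : ℝ) ≤ (D : ℝ) ∧
            (D : ℝ) ≤ Real.sqrt ((|l| : ℤ) * t : ℤ) * (x : ℝ)) := by
  refine ⟨10 * |l|, ?_⟩
  intro t ht a b ha hab heq D x y hDdef hxdef hydef hX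
  have hgpos : 0 < Int.gcd a b := Int.gcd_pos_of_ne_zero_left b ha.ne'
  have hD : 0 < D := by omega
  have hax : a = D * x := by
    rw [hxdef, Int.mul_ediv_cancel']
    rw [hDdef]; exact Int.gcd_dvd_left a b
  have hby : b = D * y := by
    rw [hydef, Int.mul_ediv_cancel']
    rw [hDdef]; exact Int.gcd_dvd_right a b
  have hco : IsCoprime x y := by
    rw [Int.isCoprime_iff_gcd_eq_one, hxdef, hydef, hDdef]
    exact Int.gcd_ediv_gcd_ediv_gcd hgpos
  have hx : 0 < x := by
    refine pos_of_mul_pos_right (a := D) ?_ hD.le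
    linarith
  have hxy : x < y := by
    refine lt_of_mul_lt_mul_left (a := D) ?_ hD.le
    linarith
  have h : t * (x ^ 2 * (D ^ 2 * x ^ 2 + l)) = y ^ 2 * (D ^ 2 * y ^ 2 + l) := by
    have hD2 : D ^ 2 ≠ 0 := by positivity
    apply mul_left_cancel₀ hD2
    rw [hax, hby] at heq
    linear_combination heq
  have hbig : 10 * |l| ≤ D ^ 2 * x ^ 2 := by
    have h1 : 1 ≤ D ^ 2 := by nlinarith
    have h2 : x ≤ x ^ 2 := by nlinarith
    nlinarith
  obtain ⟨hlow, hup⟩ := fourth_power_bounds ht hD hx hxy hbig h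
  have hy2 := sq_le_two_mul ht hup
  have hDup := gcd_sq_upper hl ht hx hy2 h
  have hDlow := gcd_sq_lower hl ht hD hx hxy hco hbig hy2 h
  have htR : (0 : ℝ) < t := by
    have : 0 < t := by linarith
    exact_mod_cast this
  have hxR : (0 : ℝ) < x := by exact_mod_cast hx
  have hyR : (0 : ℝ) < y := by exact_mod_cast hx.trans hxy
  have hDR : (0 : ℝ) < D := by exact_mod_cast hD
  have hlowR : 9 * ((t : ℝ) * x ^ 4) ≤ 11 * y ^ 4 := by exact_mod_cast hlow
  have hupR : 9 * (y : ℝ) ^ 4 ≤ 11 * (t * x ^ 4) := by exact_mod_cast hup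
  have hDlowR : (x : ℝ) ^ 2 ≤ 4 * (t * D ^ 2) := by exact_mod_cast hDlow
  have hDupR : (D : ℝ) ^ 2 ≤ (|l| * t : ℤ) * x ^ 2 := by exact_mod_cast hDup
  have hr4 : ((t : ℝ) ^ ((1 : ℝ) / 4)) ^ 4 = t := by
    rw [← Real.rpow_natCast, ← Real.rpow_mul htR.le]
    norm_num
  have hr0 : 0 < (t : ℝ) ^ ((1 : ℝ) / 4) := Real.rpow_pos_of_pos htR _
  have htx : 0 < (t : ℝ) * x ^ 4 := by positivity
  refine ⟨⟨?_, ?_⟩, ?_, ?_⟩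
  · refine lt_of_pow_lt_pow_left₀ 4 hyR.le ?_
    rw [mul_pow, mul_pow, hr4]
    norm_num
    linarith
  · refine lt_of_pow_lt_pow_left₀ 4 (by positivity) ?_
    rw [mul_pow, mul_pow, hr4]
    norm_num
    linarith
  · have hs := Real.sqrt_pos.mpr htR
    rw [div_le_iff₀ hs]
    refine (sq_le_sq₀ (by positivity) (by positivity)).mp ?_
    rw [mul_pow, mul_pow, Real.sq_sqrt htR.le]
    have : 0 < (t : ℝ) * D ^ 2 := by positivity
    norm_num
    linarith
  · refine (sq_le_sq₀ (by positivity) (by positivity)).mp ?_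
    rw [mul_pow, Real.sq_sqrt]
    · exact hDupR
    · have : 0 ≤ |l| * t := by positivity
      exact_mod_cast this
end

section
/- Let t ≥ 2 be an integer, l a non-zero integer, and x < y positive integers with |y⁴ − t·x⁴| ≤ |l|·t·(t−1). Then |t^{1/4} − y/x| ≤ |l|·t^{5/4}/x⁴. -/
/-!
Put `s = t^{1/4}` and `r = y/x > 0`. From `r⁴ - s⁴ = (r - s)(r + s)(r² + s²)` and
`(r + s)(r² + s²) ≥ s³` one gets `|s - r| s³ ≤ |r⁴ - t| = |y⁴ - t x⁴| / x⁴`, which by hypothesis is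
at most `|l| t² / x⁴ = |l| s⁸ / x⁴`. Dividing by `s³` gives the bound.
-/

/-- If `x < y` are positive integers with `|y⁴ − tx⁴| ≤ |l|·t·(t−1)`, then
`|t^{1/4} − y/x| ≤ |l|·t^{5/4}/x⁴`. -/
theorem stmt_17 (t l : ℤ) (ht : 2 ≤ t) (hl : l ≠ 0) (x y : ℤ) (hx : 0 < x)
    (hxy : x < y) (h : |y ^ 4 - t * x ^ 4| ≤ |l| * t * (t - 1)) :
    |(t : ℝ) ^ ((1 : ℝ) / 4) - (y : ℝ) / (x : ℝ)| ≤
      (|l| : ℤ) * (t : ℝ) ^ ((5 : ℝ) / 4) / (x : ℝ) ^ 4 := by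
  have ht0 : (0 : ℝ) < t := by exact_mod_cast (by omega : 0 < t)
  have hx0 : (0 : ℝ) < x := by exact_mod_cast hx
  have hy0 : (0 : ℝ) < y := by exact_mod_cast hx.trans hxy
  have hR : |(y : ℝ) ^ 4 - t * (x : ℝ) ^ 4| ≤ |(l : ℝ)| * t * (t - 1) := by exact_mod_cast h
  have hs4 : ((t : ℝ) ^ ((1 : ℝ) / 4)) ^ 4 = t := by
    rw [← Real.rpow_natCast, ← Real.rpow_mul ht0.le]; norm_num
  have hs5 : (t : ℝ) ^ ((5 : ℝ) / 4) = ((t : ℝ) ^ ((1 : ℝ) / 4)) ^ 5 := by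
    rw [← Real.rpow_natCast, ← Real.rpow_mul ht0.le]; norm_num
  have hs : 0 < (t : ℝ) ^ ((1 : ℝ) / 4) := Real.rpow_pos_of_pos ht0 _
  rw [hs5, Int.cast_abs]
  generalize (t : ℝ) ^ ((1 : ℝ) / 4) = s at *
  have hr : 0 < (y : ℝ) / x := div_pos hy0 hx0
  have hrx : (y : ℝ) = y / x * x := by field_simp
  generalize (y : ℝ) / x = r at *
  have hx4 : (0 : ℝ) < (x : ℝ) ^ 4 := by positivity
  rw [le_div_iff₀ hx4]
  have hfac : (y : ℝ) ^ 4 - t * (x : ℝ) ^ 4 =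
      -((s - r) * ((r + s) * (r ^ 2 + s ^ 2)) * (x : ℝ) ^ 4) := by
    rw [hrx, ← hs4]; ring
  have hpos : 0 < (r + s) * (r ^ 2 + s ^ 2) := by positivity
  rw [hfac, abs_neg, abs_mul, abs_mul, abs_of_pos hpos, abs_of_pos hx4] at hR
  have hge : s ^ 3 ≤ (r + s) * (r ^ 2 + s ^ 2) := by
    have : 0 ≤ r ^ 3 + r * s ^ 2 + s * r ^ 2 := by positivity
    linarith
  refine le_of_mul_le_mul_right ?_ (pow_pos hs 3)
  calc |s - r| * (x : ℝ) ^ 4 * s ^ 3 = |s - r| * s ^ 3 * (x : ℝ) ^ 4 := by ring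
    _ ≤ |s - r| * ((r + s) * (r ^ 2 + s ^ 2)) * (x : ℝ) ^ 4 := by gcongr
    _ ≤ |(l : ℝ)| * t * (t - 1) := hR
    _ ≤ |(l : ℝ)| * t * t := by gcongr; linarith
    _ = |(l : ℝ)| * s ^ 5 * s ^ 3 := by rw [← hs4]; ring
end

section
/- Let l ≥ 1 and t ≥ 2 be integers. There is a threshold U₀ depending only on l and t such that the following holds: if a < b are positive integers with b(b+l)(b+2l) = t·a(a+l)(a+2l), and, with x = a+l, y = b+l, D = gcd(x, y), u = x/D, v = y/D, one has u ≥ U₀, then t·u > v and D² ≤ t·u·l². -/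
/-!
Substituting `x = D u`, `y = D v` turns the equation `y (y² - l²) = t x (x² - l²)` into
`D² (t u³ - v³) = l² (t u - v)`, and the threshold `U₀ = l` works.

If `t u ≤ v`, then `v ≥ 2 u` and `t u³ ≤ v u²`, so `D² (v³ - t u³) ≥ v (v² - u²) ≥ 3 u² v`, while
the other side gives `l² (v - t u) < l² v`; this contradicts `u ≥ l`. Hence `t u > v`, the integer
`t u³ - v³` is at least `1`, and `D² ≤ l² (t u - v) ≤ t u l²`.
-/

/-- For `u` sufficiently large (in terms of `l` and `t`), the transformed equation
forces `s > 0`, i.e. `tu > v`, and hence `D² ≤ t·u·l²`. -/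
theorem stmt_18 (l t : ℤ) (hl : 1 ≤ l) (ht : 2 ≤ t) :
    ∃ U₀ : ℤ, ∀ a b : ℤ, 0 < a → a < b →
      b * (b + l) * (b + 2 * l) = t * (a * (a + l) * (a + 2 * l)) →
        ∀ x y D u v : ℤ, x = a + l → y = b + l → D = Int.gcd x y →
          u = x / D → v = y / D → U₀ ≤ u →
            t * u > v ∧ D ^ 2 ≤ t * u * l ^ 2 := by
  refine ⟨l, ?_⟩
  intro a b ha hab h x y D u v hx hy hD hu hv hU
  have hDx : D ∣ x := hD ▸ Int.gcd_dvd_left x y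
  have hDy : D ∣ y := hD ▸ Int.gcd_dvd_right x y
  have hxu : x = D * u := by rw [hu, Int.mul_ediv_cancel' hDx]
  have hyv : y = D * v := by rw [hv, Int.mul_ediv_cancel' hDy]
  have hD0 : 0 < D := by
    have h0 : 0 ≤ D := by rw [hD]; positivity
    rcases h0.lt_or_eq with h1 | h1
    · exact h1
    · rw [← h1, zero_mul] at hxu
      omega
  have hu0 : 0 < u := by omega
  have hv0 : 0 < v := by
    have : 0 < D * v := by omega
    exact pos_of_mul_pos_right this hD0.le
  have key : D ^ 2 * (t * u ^ 3 - v ^ 3) = l ^ 2 * (t * u - v) := by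
    have ha' : a = D * u - l := by omega
    have hb' : b = D * v - l := by omega
    subst ha' hb'
    apply mul_left_cancel₀ hD0.ne'
    linear_combination -h
  have hD2 : 1 ≤ D ^ 2 := one_le_pow₀ hD0
  have hlt : v < t * u := by
    by_contra! hle
    have h2u : 2 * u ≤ v := (mul_le_mul_of_nonneg_right ht hu0.le).trans hle
    have h1 : t * u ^ 3 ≤ v * u ^ 2 := by nlinarith [sq_nonneg u]
    have h2 : 4 * u ^ 2 ≤ v ^ 2 := by nlinarith
    have h3 : 3 * u ^ 2 * v ≤ v ^ 3 - t * u ^ 3 := by nlinarith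
    have h4 : v ^ 3 - t * u ^ 3 ≤ D ^ 2 * (v ^ 3 - t * u ^ 3) :=
      le_mul_of_one_le_left (by nlinarith [mul_pos (pow_pos hu0 2) hv0]) hD2
    have h5 : l ^ 2 * (v - t * u) ≤ u ^ 2 * v :=
      mul_le_mul (pow_le_pow_left₀ (by omega) hU 2) (by nlinarith) (by omega) (sq_nonneg u)
    nlinarith [mul_pos (pow_pos hu0 2) hv0]
  refine ⟨hlt, ?_⟩
  have hpos : 0 < t * u ^ 3 - v ^ 3 := by
    have : 0 < D ^ 2 * (t * u ^ 3 - v ^ 3) := by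
      rw [key]
      exact mul_pos (by positivity) (by omega)
    exact pos_of_mul_pos_right this (sq_nonneg D)
  have h6 : D ^ 2 ≤ D ^ 2 * (t * u ^ 3 - v ^ 3) := le_mul_of_one_le_right (sq_nonneg D) hpos
  nlinarith [mul_nonneg (sq_nonneg l) hv0.le]
end
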